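/- Let R_{abcd} have Riemann symmetries on Minkowski space. Then the two expressions for the Bel tensor agree: ½ (R*_{apcq} R*_b{}^p{}_d{}^q + *R_{apcq} *R_b{}^p{}_d{}^q + *R*_{apcq} *R*_b{}^p{}_d{}^q + R_{apcq} R_b{}^p{}_d{}^q) = R_{aecf} R_b{}^e{}_d{}^f − ½ g_{cd} R_{aefp} R_b{}^{efp} − ½ g_{ab} R_{cefp} R_d{}^{efp} + R_b{}^e{}_c{}^f R_{dfae} + ⅛ g_{ab} g_{cd} R_{efph} R^{efph}. -/

import Mathlib

noncomputable section

/-- The Minkowski metric `diag(-1,1,1,1)` on `ℝ⁴`. -/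
def gm : Fin 4 → Fin 4 → ℝ := fun a b => if a = b then (if a = 0 then -1 else 1) else 0

/-- The totally antisymmetric volume form with `η₀₁₂₃ = 1`. -/
def eta (a b c d : Fin 4) : ℝ :=
  ((((b.val : ℤ) - a.val).sign * ((c.val : ℤ) - a.val).sign * ((d.val : ℤ) - a.val).sign *
    ((c.val : ℤ) - b.val).sign * ((d.val : ℤ) - b.val).sign * ((d.val : ℤ) - c.val).sign : ℤ) : ℝ)

/-- Index lowering: `n_a = g_{ab} n^b`. -/
def lo (n : Fin 4 → ℝ) (a : Fin 4) : ℝ := ∑ b, gm a b * n b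

/-- Spatial metric `h_{ab} = g_{ab} + n_a n_b`. -/
def hm (n : Fin 4 → ℝ) (a b : Fin 4) : ℝ := gm a b + lo n a * lo n b

/-- Spatial volume form `ε_{abc} = n^d η_{dabc}` of a unit timelike `n`. -/
def eps (n : Fin 4 → ℝ) (a b c : Fin 4) : ℝ := ∑ d, n d * eta d a b c

/-- A rank-4 tensor. -/
abbrev Tensor4 := Fin 4 → Fin 4 → Fin 4 → Fin 4 → ℝ

/-- `R_{abcd}` has the symmetries of a Riemann tensor. -/
structure RiemannSymm (R : Tensor4) : Prop where
  antisymm₁ : ∀ a b c d, R a b c d = - R b a c d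
  antisymm₂ : ∀ a b c d, R a b c d = - R a b d c
  pairSymm : ∀ a b c d, R a b c d = R c d a b
  firstBianchi : ∀ a b c d,
    (1/6 : ℝ) * (R a b c d + R b c a d + R c a b d
      - R b a c d - R a c b d - R c b a d) = 0

/-- Left dual `*R_{abcd} = ½ η_{abpq} R^{pq}{}_{cd}`. -/
def dualL (R : Tensor4) (a b c d : Fin 4) : ℝ :=
  (1/2) * ∑ p, ∑ q, eta a b p q * (∑ r, ∑ s, gm p r * gm q s * R r s c d)

/-- Right dual `R*_{abcd} = ½ η_{pqcd} R_{ab}{}^{pq}`. -/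
def dualR (R : Tensor4) (a b c d : Fin 4) : ℝ :=
  (1/2) * ∑ p, ∑ q, eta p q c d * (∑ r, ∑ s, gm p r * gm q s * R a b r s)

/-- Double dual `*R*_{abcd} = ½ η_{ab}{}^{pq} R*_{pqcd}`. -/
def dualLR (R : Tensor4) : Tensor4 := dualL (dualR R)

/-- `Y_{ac} = R_{abcd} n^b n^d`. -/
def Yt (R : Tensor4) (n : Fin 4 → ℝ) (a c : Fin 4) : ℝ := ∑ b, ∑ d, R a b c d * n b * n d

/-- `Z_{ac} = *R_{abcd} n^b n^d`. -/
def Zt (R : Tensor4) (n : Fin 4 → ℝ) (a c : Fin 4) : ℝ := ∑ b, ∑ d, dualL R a b c d * n b * n d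

/-- `X_{ac} = *R*_{abcd} n^b n^d`. -/
def Xt (R : Tensor4) (n : Fin 4 → ℝ) (a c : Fin 4) : ℝ := ∑ b, ∑ d, dualLR R a b c d * n b * n d

/-- Double contraction `A_{apcq} B_b{}^p{}_d{}^q` (indices raised with `gm`). -/
def q2 (A B : Tensor4) (a b c d : Fin 4) : ℝ :=
  ∑ p, ∑ q, ∑ r, ∑ s, A a p c q * gm p r * gm q s * B b r d s

/-- Triple contraction `A_{aefp} B_b{}^{efp}`. -/
def q3 (A B : Tensor4) (a b : Fin 4) : ℝ :=
  ∑ e, ∑ f, ∑ p, ∑ r, ∑ s, ∑ t, A a e f p * gm e r * gm f s * gm p t * B b r s t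

/-- Full contraction `A_{efph} B^{efph}`. -/
def q4 (A B : Tensor4) : ℝ :=
  ∑ e, ∑ f, ∑ p, ∑ h, ∑ r, ∑ s, ∑ t, ∑ u,
    A e f p h * gm e r * gm f s * gm p t * gm h u * B r s t u

/-- The Bel tensor of `R`:
`B_{abcd} = R_{aecf} R_b{}^e{}_d{}^f − ½ g_{cd} R_{aefp} R_b{}^{efp} − ½ g_{ab} R_{cefp} R_d{}^{efp}`
`+ R_b{}^e{}_c{}^f R_{dfae} + ⅛ g_{ab} g_{cd} R_{efph} R^{efph}`. -/
def Bel (R : Tensor4) (a b c d : Fin 4) : ℝ :=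
  q2 R R a b c d
  - (1/2) * gm c d * q3 R R a b
  - (1/2) * gm a b * q3 R R c d
  + (∑ e, ∑ f, ∑ r, ∑ s, gm e r * gm f s * R b r c s * R d f a e)
  + (1/8) * gm a b * gm c d * q4 R R

/-!
The product of two volume forms is minus a Gram determinant of the metric, because
`det g = -1`. Contracting one index, this gives for bivectors
`⋆A_{ap} ⋆B_b{}^p = A_{bp} B_a{}^p - ½ g_{ab} A_{pq} B^{pq}`.
Applied to the right pair of `R`, to its left pair, and to both in turn, this identity eliminates
all duals; each dualised pair exchanges its two free indices and leaves a trace term.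
-/

open Finset Matrix

section Determinants

variable {R : Type*} [CommRing R]

theorem det_one_submatrix_eq_prod_sign {n : ℕ} (v : Fin n → Fin n) :
    ((1 : Matrix (Fin n) (Fin n) R).submatrix v id).det =
      ((∏ i, ∏ j ∈ Ioi i, ((v j : ℤ) - v i).sign : ℤ) : R) := by
  by_cases hv : Function.Injective v
  · obtain ⟨σ, rfl⟩ : ∃ σ : Equiv.Perm (Fin n), ⇑σ = v :=
      ⟨Equiv.ofBijective v hv.bijective_of_finite, rfl⟩
    rw [det_permute, det_one, mul_one, σ.sign_eq_prod_prod_Ioi]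
    simp only [Units.coe_prod]
    congr 1
    refine prod_congr rfl fun i _ => prod_congr rfl fun j hij => ?_
    have hne : σ i ≠ σ j := σ.injective.ne (mem_Ioi.mp hij).ne
    rcases hne.lt_or_gt with hlt | hgt
    · rw [if_pos hlt, Int.sign_eq_one_of_pos (by simpa using hlt), Units.val_one]
    · rw [if_neg hgt.not_gt, Int.sign_eq_neg_one_of_neg (by simpa using hgt), Units.val_neg,
        Units.val_one]
  · obtain ⟨i, j, hij, hvij⟩ : ∃ i j, i < j ∧ v i = v j := by
      contrapose! hv
      exact .of_lt_imp_ne hv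
    rw [det_zero_of_row_eq hij.ne (congrArg (fun k l => (1 : Matrix (Fin n) (Fin n) R) k l) hvij),
      prod_eq_zero (mem_univ i) (prod_eq_zero (mem_Ioi.mpr hij) (by simp [hvij])), Int.cast_zero]

theorem det_submatrix_eq_mul_det_mul {n : Type*} [Fintype n] [DecidableEq n]
    (M : Matrix n n R) (v w : n → n) :
    (M.submatrix v w).det =
      ((1 : Matrix n n R).submatrix v id).det * M.det *
        ((1 : Matrix n n R).submatrix w id).det := by
  rw [← det_transpose (submatrix _ w id), ← det_mul, ← det_mul]
  congr 1
  ext i j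
  simp [Matrix.mul_apply, Matrix.one_apply]

theorem det_submatrix_expand_second_row {m n : Type*} (M : Matrix m n R) (a b c p : m)
    (d e f q : n) :
    (M.submatrix ![a, p, b, c] ![d, q, e, f]).det =
      M p q * (M.submatrix ![a, b, c] ![d, e, f]).det
        - M p d * (M.submatrix ![a, b, c] ![q, e, f]).det
        - M p e * (M.submatrix ![a, b, c] ![d, q, f]).det
        - M p f * (M.submatrix ![a, b, c] ![d, e, q]).det := by
  have hrows : ![a, p, b, c] ∘ Fin.succAbove 1 = ![a, b, c] := by
    funext i; fin_cases i <;> rfl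
  have hcols : ![d, q, e, f] ∘ Fin.succAbove 0 = ![q, e, f] ∧
      ![d, q, e, f] ∘ Fin.succAbove 1 = ![d, e, f] ∧
      ![d, q, e, f] ∘ Fin.succAbove 2 = ![d, q, f] ∧
      ![d, q, e, f] ∘ Fin.succAbove 3 = ![d, q, e] := by
    refine ⟨?_, ?_, ?_, ?_⟩ <;> funext i <;> fin_cases i <;> rfl
  have hswap : (M.submatrix ![a, b, c] ![d, q, e]).det =
      -(M.submatrix ![a, b, c] ![d, e, q]).det := by
    simp only [det_fin_three, submatrix_apply, Matrix.cons_val]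
    ring
  rw [det_succ_row _ 1]
  simp only [Fin.sum_univ_four, submatrix_submatrix, hrows, hcols, hswap, submatrix_apply,
    Matrix.cons_val, Fin.isValue, Fin.coe_ofNat_eq_mod]
  ring

end Determinants

theorem eta_eq_det (a b c d : Fin 4) :
    eta a b c d = ((1 : Matrix (Fin 4) (Fin 4) ℝ).submatrix ![a, b, c, d] id).det := by
  rw [det_one_submatrix_eq_prod_sign, eta]
  simp [Fin.prod_univ_succ, Fin.prod_Ioi_succ, mul_assoc]

theorem gm_comm (a b : Fin 4) : gm a b = gm b a := by
  simp only [gm, eq_comm (a := a)]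
  split_ifs <;> simp_all

theorem gm_eq_diagonal : of gm = diagonal fun a => gm a a := by
  ext a b
  by_cases hab : a = b <;> simp [gm, hab]

theorem sum_gm_mul (a : Fin 4) (f : Fin 4 → ℝ) : ∑ b, gm a b * f b = gm a a * f a := by
  simp [gm]

theorem gm_self_mul_self (a : Fin 4) : gm a a * gm a a = 1 := by
  by_cases ha : a = 0 <;> simp [gm, ha]

theorem sum_gm_self_mul_gm_mul (a : Fin 4) (f : Fin 4 → ℝ) :
    ∑ p, gm p p * (gm p a * f p) = f a := by
  rw [sum_eq_single a (by simp +contextual [gm]) (by simp), ← mul_assoc, gm_self_mul_self, one_mul]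

theorem det_gm : (of gm).det = -1 := by
  rw [gm_eq_diagonal, det_diagonal]
  simp [gm]

theorem eta_mul_eta (a b c d e f g h : Fin 4) :
    eta a b c d * eta e f g h = -((of gm).submatrix ![a, b, c, d] ![e, f, g, h]).det := by
  rw [det_submatrix_eq_mul_det_mul, det_gm, eta_eq_det, eta_eq_det]
  ring

theorem sum_eta_mul_eta (a b c d e f : Fin 4) :
    ∑ p, gm p p * (eta a p b c * eta d p e f) =
      -((of gm).submatrix ![a, b, c] ![d, e, f]).det := by
  simp only [eta_mul_eta, det_submatrix_expand_second_row, of_apply, mul_neg, mul_sub,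
    sum_neg_distrib, sum_sub_distrib, sum_gm_self_mul_gm_mul]
  simp only [← mul_assoc, gm_self_mul_self, one_mul, sum_const, card_univ, Fintype.card_fin]
  ring

theorem sum_sum_gm_self_mul_gm_mul (k : ℝ) (A : Fin 4 → Fin 4 → ℝ) (a b : Fin 4) :
    ∑ p, gm p p * ∑ q, gm q q * (k * (gm p a * gm q b) * A p q) = k * A a b := by
  calc _ = ∑ p, gm p p * (gm p a * ∑ q, gm q q * (gm q b * (k * A p q))) := by
        simp only [mul_sum]
        exact sum_congr rfl fun p _ => sum_congr rfl fun q _ => by ring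
    _ = k * A a b := by simp only [sum_gm_self_mul_gm_mul]

/-- The Hodge dual `½ η_{abpq} A^{pq}` of a bivector `A_{ab}`, with the index order of `dualL`. -/
def hodgeDual (A : Fin 4 → Fin 4 → ℝ) (a b : Fin 4) : ℝ :=
  (1/2) * ∑ p, ∑ q, eta a b p q * (∑ r, ∑ s, gm p r * gm q s * A r s)

/-- The single contraction `A_{ap} B_b{}^p`. As `gm` is diagonal and its own inverse, `p` is raised
by the factor `gm p p`. -/
def contr₁ (A B : Fin 4 → Fin 4 → ℝ) (a b : Fin 4) : ℝ := ∑ p, gm p p * (A a p * B b p)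

/-- The full contraction `A_{pq} B^{pq}`. -/
def contr₂ (A B : Fin 4 → Fin 4 → ℝ) : ℝ := ∑ p, gm p p * contr₁ A B p p

theorem hodgeDual_apply (A : Fin 4 → Fin 4 → ℝ) (a b : Fin 4) :
    hodgeDual A a b = (1/2) * ∑ p, gm p p * ∑ q, gm q q * (eta a b p q * A p q) := by
  simp only [hodgeDual, mul_assoc, ← mul_sum, sum_gm_mul]
  simp only [mul_sum, mul_left_comm (eta _ _ _ _)]

theorem sum_eta_mul_hodgeDual {A : Fin 4 → Fin 4 → ℝ} (hA : ∀ a b, A a b = -A b a)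
    (a b q r : Fin 4) :
    ∑ p, gm p p * (eta a p q r * hodgeDual A b p) =
      -(gm b a * A q r + gm b q * A r a + gm b r * A a q) := by
  have hgram (u v : Fin 4) : -((of gm).submatrix ![b, u, v] ![a, q, r]).det * A u v =
      -gm b a * (gm u q * gm v r) * A u v + gm b a * (gm u r * gm v q) * A u v
        + gm b q * (gm u a * gm v r) * A u v + -gm b q * (gm u r * gm v a) * A u v
        + -gm b r * (gm u a * gm v q) * A u v + gm b r * (gm u q * gm v a) * A u v := by
    simp only [det_fin_three, submatrix_apply, Matrix.cons_val, of_apply]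
    ring
  calc ∑ p, gm p p * (eta a p q r * hodgeDual A b p)
      = (1/2) * ∑ u, gm u u * ∑ v, gm v v *
          ((∑ p, gm p p * (eta b p u v * eta a p q r)) * A u v) := by
        simp only [hodgeDual_apply, mul_sum, sum_mul]
        rw [sum_comm]
        refine sum_congr rfl fun u _ => ?_
        rw [sum_comm]
        exact sum_congr rfl fun v _ => sum_congr rfl fun p _ => by ring
    _ = (1/2) * (-gm b a * A q r + gm b a * A r q + gm b q * A a r + -gm b q * A r a
          + -gm b r * A a q + gm b r * A q a) := by
        simp only [sum_eta_mul_eta, hgram, mul_add, sum_add_distrib, sum_sum_gm_self_mul_gm_mul]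
    _ = -(gm b a * A q r + gm b q * A r a + gm b r * A a q) := by
        rw [hA r q, hA a r, hA q a]
        ring

theorem contr₁_hodgeDual_hodgeDual {A B : Fin 4 → Fin 4 → ℝ} (hA : ∀ a b, A a b = -A b a)
    (hB : ∀ a b, B a b = -B b a) (a b : Fin 4) :
    contr₁ (hodgeDual A) (hodgeDual B) a b = contr₁ A B b a - (1/2) * gm a b * contr₂ A B := by
  calc contr₁ (hodgeDual A) (hodgeDual B) a b
      = (1/2) * ∑ q, gm q q * ∑ r, gm r r * (A q r *
          ∑ p, gm p p * (eta a p q r * hodgeDual B b p)) := by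
        simp only [contr₁, hodgeDual_apply A, mul_sum, sum_mul]
        rw [sum_comm]
        refine sum_congr rfl fun u _ => ?_
        rw [sum_comm]
        exact sum_congr rfl fun v _ => sum_congr rfl fun p _ => by ring
    _ = -(1/2) * (gm a b * (∑ q, gm q q * ∑ r, gm r r * (A q r * B q r))
          + ∑ q, gm q q * (gm q b * ∑ r, gm r r * (A q r * B r a))
          + ∑ q, gm q q * ∑ r, gm r r * (gm r b * (A q r * B a q))) := by
        simp only [sum_eta_mul_hodgeDual hB, gm_comm b, mul_sum, ← sum_add_distrib]
        exact sum_congr rfl fun q _ => sum_congr rfl fun r _ => by ring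
    _ = -(1/2) * (gm a b * contr₂ A B + -contr₁ A B b a + -contr₁ A B b a) := by
        simp only [sum_gm_self_mul_gm_mul, contr₁, contr₂, ← sum_neg_distrib, ← mul_neg, hB _ a,
          hA _ b, neg_mul]
    _ = contr₁ A B b a - (1/2) * gm a b * contr₂ A B := by ring

theorem q2_eq_sum_contr₁ (A B : Tensor4) (a b c d : Fin 4) :
    q2 A B a b c d = ∑ p, gm p p * contr₁ (A a p) (B b p) c d := by
  have h (p q r s : Fin 4) : A a p c q * gm p r * gm q s * B b r d s =
      gm p r * (gm q s * (A a p c q * B b r d s)) := by ring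
  simp only [q2, h, contr₁, ← mul_sum, sum_gm_mul]

theorem q3_eq_sum_contr₂ (A B : Tensor4) (a b : Fin 4) :
    q3 A B a b = ∑ p, gm p p * contr₂ (A a p) (B b p) := by
  have h (e f p r s t : Fin 4) : A a e f p * gm e r * gm f s * gm p t * B b r s t =
      gm e r * (gm f s * (gm p t * (A a e f p * B b r s t))) := by ring
  simp only [q3, h, contr₁, contr₂, ← mul_sum, sum_gm_mul]

theorem q4_eq_sum_contr₂ (A B : Tensor4) :
    q4 A B = ∑ p, gm p p * ∑ q, gm q q * contr₂ (A p q) (B p q) := by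
  have h (e f p h r s t u : Fin 4) :
      A e f p h * gm e r * gm f s * gm p t * gm h u * B r s t u =
        gm e r * (gm f s * (gm p t * (gm h u * (A e f p h * B r s t u)))) := by ring
  simp only [q4, h, contr₁, contr₂, ← mul_sum, sum_gm_mul]

/-- Exchange of the two index pairs, `A_{abcd} ↦ A_{cdab}`, under which the left and right duals
correspond to each other. -/
def pairSwap (A : Tensor4) : Tensor4 := fun a b c d => A c d a b

theorem eta_swap_pairs (a b c d : Fin 4) : eta a b c d = eta c d a b := by
  simp only [eta]
  norm_cast
  revert a b c d
  decide

theorem dualR_apply (A : Tensor4) (a b : Fin 4) : dualR A a b = hodgeDual (A a b) := by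
  funext c d
  simp only [dualR, hodgeDual, eta_swap_pairs c d]

theorem pairSwap_dualR (A : Tensor4) : pairSwap (dualR A) = dualL (pairSwap A) := by
  funext a b c d
  rw [pairSwap, dualR_apply]
  rfl

theorem pairSwap_dualL (A : Tensor4) : pairSwap (dualL A) = dualR (pairSwap A) :=
  (congrArg pairSwap (pairSwap_dualR (pairSwap A))).symm

theorem q2_pairSwap (A B : Tensor4) (a b c d : Fin 4) :
    q2 (pairSwap A) (pairSwap B) a b c d = q2 A B c d a b := by
  simp only [q2_eq_sum_contr₁, contr₁, mul_sum, pairSwap]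
  rw [sum_comm]
  exact sum_congr rfl fun p _ => sum_congr rfl fun q _ => mul_left_comm _ _ _

theorem q2_swap (A B : Tensor4) (a b c d : Fin 4) : q2 A B a b c d = q2 B A b a d c := by
  simp only [q2_eq_sum_contr₁, contr₁, mul_comm]

theorem q3_swap (A B : Tensor4) (a b : Fin 4) : q3 A B a b = q3 B A b a := by
  simp only [q3_eq_sum_contr₂, contr₂, contr₁, mul_comm]

theorem q2_dualR_dualR {A B : Tensor4} (hA : ∀ a b c d, A a b c d = -A a b d c)
    (hB : ∀ a b c d, B a b c d = -B a b d c) (a b c d : Fin 4) :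
    q2 (dualR A) (dualR B) a b c d = q2 A B a b d c - (1/2) * gm c d * q3 A B a b := by
  simp only [q2_eq_sum_contr₁, q3_eq_sum_contr₂, dualR_apply,
    contr₁_hodgeDual_hodgeDual (hA _ _) (hB _ _), mul_sum, ← sum_sub_distrib]
  exact sum_congr rfl fun p _ => by ring

theorem q2_dualL_dualL {A B : Tensor4} (hA : ∀ a b c d, A a b c d = -A b a c d)
    (hB : ∀ a b c d, B a b c d = -B b a c d) (a b c d : Fin 4) :
    q2 (dualL A) (dualL B) a b c d =
      q2 A B b a c d - (1/2) * gm a b * q3 (pairSwap A) (pairSwap B) c d := by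
  rw [← q2_pairSwap, pairSwap_dualL, pairSwap_dualL, q2_dualR_dualR, q2_pairSwap]
  exacts [fun c d a b => hA a b c d, fun c d a b => hB a b c d]

theorem q3_eq_sum_contr₁_pairSwap (A B : Tensor4) (a b : Fin 4) :
    q3 A B a b = ∑ p, gm p p * ∑ q, gm q q * contr₁ (pairSwap A p q) (pairSwap B p q) a b := by
  simp only [q3_eq_sum_contr₂, contr₁, contr₂, mul_sum, pairSwap]
  rw [← sum_comm_cycle]
  exact sum_congr rfl fun p _ => sum_congr rfl fun q _ => sum_congr rfl fun r _ => by ring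

theorem q4_pairSwap (A B : Tensor4) : q4 (pairSwap A) (pairSwap B) = q4 A B := by
  simp only [q4_eq_sum_contr₂, contr₂, contr₁, mul_sum, pairSwap]
  rw [sum_comm_cycle]
  refine sum_congr rfl fun p _ => ?_
  rw [sum_comm_cycle]
  exact sum_congr rfl fun q _ => sum_congr rfl fun r _ => sum_congr rfl fun s _ => by ring

theorem q3_dualL_dualL {A B : Tensor4} (hA : ∀ a b c d, A a b c d = -A b a c d)
    (hB : ∀ a b c d, B a b c d = -B b a c d) (a b : Fin 4) :
    q3 (dualL A) (dualL B) a b = q3 A B b a - (1/2) * gm a b * q4 A B := by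
  have hswap (C : Tensor4) (hC : ∀ a b c d, C a b c d = -C b a c d) (p q r s : Fin 4) :
      pairSwap C p q r s = -pairSwap C p q s r := hC r s p q
  rw [← q4_pairSwap]
  simp only [q3_eq_sum_contr₁_pairSwap, pairSwap_dualL, dualR_apply, q4_eq_sum_contr₂,
    contr₁_hodgeDual_hodgeDual (hswap A hA _ _) (hswap B hB _ _), mul_sub, sum_sub_distrib, mul_sum,
    mul_left_comm (gm _ _) ((1/2) * gm a b)]

theorem dualR_antisymm {A : Tensor4} (hA : ∀ a b c d, A a b c d = -A b a c d) (a b c d : Fin 4) :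
    dualR A a b c d = -dualR A b a c d := by
  simp only [dualR, hA a b, mul_neg, sum_neg_distrib]

theorem bel_cross_eq_q2 (R : Tensor4) (a b c d : Fin 4) :
    (∑ e, ∑ f, ∑ r, ∑ s, gm e r * gm f s * R b r c s * R d f a e) =
      q2 (pairSwap R) R a b d c := by
  simp only [q2_eq_sum_contr₁, contr₁, pairSwap, mul_assoc, ← mul_sum, sum_gm_mul,
    mul_comm (R b _ _ _)]

theorem bel_tensor_two_expressions_general {R : Tensor4}
    (hanti : ∀ a b c d, R a b c d = -R b a c d) (hpair : ∀ a b c d, R a b c d = R c d a b)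
    (a b c d : Fin 4) :
    (1/2) * (q2 (dualR R) (dualR R) a b c d + q2 (dualL R) (dualL R) a b c d
        + q2 (dualLR R) (dualLR R) a b c d + q2 R R a b c d)
      = Bel R a b c d := by
  have hswap : pairSwap R = R := by
    funext a b c d
    exact hpair c d a b
  have hanti₂ (a b c d) : R a b c d = -R a b d c := by
    rw [hpair, hanti, hpair d c]
  have hR : q2 (dualR R) (dualR R) a b c d = q2 R R a b d c - (1/2) * gm c d * q3 R R a b :=
    q2_dualR_dualR hanti₂ hanti₂ a b c d
  have hL : q2 (dualL R) (dualL R) a b c d = q2 R R a b d c - (1/2) * gm a b * q3 R R c d := by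
    rw [q2_dualL_dualL hanti hanti, hswap, q2_swap]
  have hLR : q2 (dualLR R) (dualLR R) a b c d = q2 R R a b c d - (1/2) * gm c d * q3 R R a b
      - (1/2) * gm a b * q3 R R c d + (1/4) * gm a b * gm c d * q4 R R := by
    rw [dualLR, q2_dualL_dualL (dualR_antisymm hanti) (dualR_antisymm hanti), pairSwap_dualR,
      hswap, q2_dualR_dualR hanti₂ hanti₂, q3_dualL_dualL hanti hanti, q2_swap, q3_swap R R b a,
      q3_swap R R d c]
    ring
  rw [Bel, bel_cross_eq_q2, hswap, hR, hL, hLR]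
  ring

/-- The two expressions for the Bel tensor agree:
`½ (R*_{apcq} R*_b{}^p{}_d{}^q + *R_{apcq} *R_b{}^p{}_d{}^q + *R*_{apcq} *R*_b{}^p{}_d{}^q`
`+ R_{apcq} R_b{}^p{}_d{}^q)` equals the expanded form `Bel R`. -/
theorem bel_tensor_two_expressions
    (R : Tensor4) (hR : RiemannSymm R) :
    ∀ a b c d : Fin 4,
      (1/2) * (q2 (dualR R) (dualR R) a b c d + q2 (dualL R) (dualL R) a b c d
        + q2 (dualLR R) (dualLR R) a b c d + q2 R R a b c d)
      = Bel R a b c d :=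
  bel_tensor_two_expressions_general hR.antisymm₁ hR.pairSymm
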